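/- Let q ≥ 4 be a prime power with q even. Then the group PSL(2, q) = SL(2, q) has exactly one conjugacy class of elements of order 2. -/

import Mathlib

theorem sl2_aux {F : Type*} [Field F] (h2 : (2 : F) = 0) (hs : ∀ a : F, ∃ s, s * s = a)
    (u : Matrix.SpecialLinearGroup (Fin 2) F) (hu : u.1 = !![1, 1; 0, 1])
    (x : Matrix.SpecialLinearGroup (Fin 2) F) (hx : orderOf x = 2) : IsConj u x := by
  have hx1 : x ≠ 1 := by
    rintro rfl
    simp at hx
  have hxx : x * x = 1 := by
    have h := pow_orderOf_eq_one x
    rwa [hx, sq] at h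
  obtain ⟨M, hM⟩ := x
  obtain ⟨a, b, c, d, rfl⟩ : ∃ a b c d, M = !![a, b; c, d] :=
    ⟨_, _, _, _, Matrix.eta_fin_two M⟩
  have hdet : a * d - b * c = 1 := by simpa [Matrix.det_fin_two] using hM
  have hm : !![a, b; c, d] * !![a, b; c, d] = (1 : Matrix (Fin 2) (Fin 2) F) :=
    congrArg Subtype.val hxx
  have h00 := congrFun (congrFun hm 0) 0
  have h11 := congrFun (congrFun hm 1) 1
  simp [Matrix.mul_apply, Fin.sum_univ_two] at h00 h11
  have had : a + d = 0 := by
    have : (a + d) ^ 2 = 0 := by linear_combination h00 + h11 + 2 * hdet + 2 * h2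
    exact pow_eq_zero_iff (two_ne_zero) |>.1 this
  have hda : d = a := by linear_combination had - a * h2
  subst hda
  suffices H : ∃ p r s t : F, p * t - r * s = 1 ∧
      !![p, r; s, t] * !![1, 1; 0, 1] = !![d, b; c, d] * !![p, r; s, t] by
    obtain ⟨p, r, s, t, hd, he⟩ := H
    refine isConj_iff.2 ⟨⟨!![p, r; s, t], by simpa [Matrix.det_fin_two] using hd⟩, ?_⟩
    refine mul_inv_eq_iff_eq_mul.2 ?_
    apply Subtype.ext
    show !![p, r; s, t] * u.1 = !![d, b; c, d] * !![p, r; s, t]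
    rw [hu, he]
  by_cases hc : c = 0
  · subst hc
    have hd1 : d = 1 := by
      have : (d - 1) ^ 2 = 0 := by linear_combination h00 + (1 - d) * h2
      have := pow_eq_zero_iff (two_ne_zero) |>.1 this
      linear_combination this
    subst hd1
    have hb : b ≠ 0 := by
      rintro rfl
      apply hx1
      apply Subtype.ext
      exact Matrix.one_fin_two.symm
    obtain ⟨s, hs⟩ := hs b⁻¹
    refine ⟨b * s, 0, 0, s, ?_, ?_⟩
    · rw [zero_mul, sub_zero, mul_assoc, hs, mul_inv_cancel₀ hb]
    · simp
  · obtain ⟨s, hs⟩ := hs c⁻¹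
    refine ⟨(d + 1) * s, s, c * s, 0, ?_, ?_⟩
    · have : c * (s * s) = 1 := by rw [hs, mul_inv_cancel₀ hc]
      linear_combination this - c * s * s * h2
    · ext i j
      fin_cases i <;> fin_cases j <;> simp [Matrix.mul_apply, Fin.sum_univ_two]
      · linear_combination (-s) * h00
      · linear_combination s * h2
      · linear_combination (-c * d * s) * h2

/-- For `q ≥ 4` even, `PSL₂(q) = SL₂(q)` has a unique conjugacy class of
involutions. -/
theorem sl2_unique_involution_class_even (q : ℕ) (hq : 4 ≤ q) (heven : Even q)
    (F : Type*) [Field F] [Fintype F] (hcard : Fintype.card F = q) :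
    (∃ x : Matrix.SpecialLinearGroup (Fin 2) F, orderOf x = 2) ∧
      ∀ x y : Matrix.SpecialLinearGroup (Fin 2) F,
        orderOf x = 2 → orderOf y = 2 → IsConj x y := by
  have hch : ringChar F = 2 := by
    rw [FiniteField.even_card_iff_char_two, hcard]
    exact Nat.even_iff.1 heven
  have h2 : (2 : F) = 0 := by
    have := ringChar.Nat.cast_ringChar (R := F)
    rw [hch] at this
    exact_mod_cast this
  have hs : ∀ a : F, ∃ s, s * s = a := fun a => by
    obtain ⟨s, h⟩ := FiniteField.isSquare_of_char_two hch a
    exact ⟨s, h.symm⟩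
  let u : Matrix.SpecialLinearGroup (Fin 2) F :=
    ⟨!![1, 1; 0, 1], by simp [Matrix.det_fin_two]⟩
  refine ⟨⟨u, ?_⟩, fun x y hx hy =>
    (sl2_aux h2 hs u rfl x hx).symm.trans (sl2_aux h2 hs u rfl y hy)⟩
  apply orderOf_eq_prime
  · apply Subtype.ext
    rw [sq]
    show !![(1 : F), 1; 0, 1] * !![1, 1; 0, 1] = 1
    rw [Matrix.one_fin_two]
    simp [one_add_one_eq_two, h2]
  · intro h
    have := congrFun (congrFun (congrArg Subtype.val h) 0) 1
    simp [u] at this
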